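/- Let $1 < p < N$, $p^* = Np/(N-p)$. Suppose $(u_k)$ is a bounded sequence in $\dot H^{1,p}(\mathbb{R}^N)$ and $a_k := \sup_{y \in \mathbb{Z}^N} \int_{(0,1)^N + y} |u_k|^p\,dx \to 0$. Let $\chi \in C_c^\infty((1/2,4),[0,3])$ with $|\chi'| \le 2$. Then $\int_{\mathbb{R}^N} \chi(|u_k|)^{p^*}\,dx \to 0$. -/

import Mathlib

open MeasureTheory Set Filter Topology
open scoped ENNReal

/-!
A cutoff function turns the Sobolev inequality on the whole space into one on a unit cube `Q`,
with the `W^{1,p}` norm over a concentric ball `B` on the right. For a truncation `χ(u)` this gives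
`∫_Q |χ(u)|^q ≤ (∫_Q |χ(u)|^q)^(1 - p/q) * C ‖χ(u)‖^p_{W^{1,p}(B)}`, where `q = p^*`. Since `χ` is
bounded and vanishes near `0`, `|χ(t)|^r ≤ C |t|^s` for all exponents `r, s > 0`: with
`(r, s) = (q, p)` the first factor is controlled by the `L^p` mass of `u` on `Q`, and with
`(r, s) = (p, q)` the `W^{1,p}` norm of `χ(u)` is controlled by `‖∇u‖_p` alone. The balls around the
lattice points overlap boundedly often, so the estimates can be summed over all cubes.
-/

open Module Metric
open scoped NNReal

section PowerIntegrals

lemma lt_of_inv_eq_inv_sub_inv {p q n : ℝ} (hq : 0 < q) (hn : 0 < n)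
    (hpq : q⁻¹ = p⁻¹ - n⁻¹) : p < q := by
  by_contra! hle
  linarith [inv_anti₀ hq hle, inv_pos.2 hn]

variable {X E : Type*} [NormedAddCommGroup E] [TopologicalSpace X] [MeasurableSpace X]
  [OpensMeasurableSpace X] {μ : Measure X} [IsFiniteMeasureOnCompacts μ] {f : X → E} {p : ℝ}

lemma integrable_norm_rpow_of_hasCompactSupport (hf : Continuous f)
    (hcf : HasCompactSupport f) (hp : 0 < p) : Integrable (fun x => ‖f x‖ ^ p) μ :=
  (hf.norm.rpow_const fun _ => Or.inr hp.le).integrable_of_hasCompactSupport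
    (hcf.comp_left (g := fun z => ‖z‖ ^ p) (by simp [hp.ne']))

lemma lintegral_enorm_rpow_eq_ofReal (hf : Continuous f) (hcf : HasCompactSupport f) (hp : 0 < p) :
    ∫⁻ x, ‖f x‖ₑ ^ p ∂μ = ENNReal.ofReal (∫ x, ‖f x‖ ^ p ∂μ) := by
  rw [ofReal_integral_eq_lintegral_ofReal
    (integrable_norm_rpow_of_hasCompactSupport hf hcf hp) (ae_of_all _ fun x => by positivity)]
  simp_rw [← ofReal_norm, ENNReal.ofReal_rpow_of_nonneg (norm_nonneg _) hp.le]

end PowerIntegrals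

section LocalSobolev

variable {E F : Type*} [NormedAddCommGroup E] [NormedSpace ℝ E]

lemma enorm_fderiv_smul_rpow_le [NormedAddCommGroup F] [NormedSpace ℝ F] {ψ : E → ℝ} {f : E → F}
    {x : E} (hψ : DifferentiableAt ℝ ψ x) (hf : DifferentiableAt ℝ f x) (hψ_le : ‖ψ x‖ ≤ 1)
    {L : ℝ≥0} (hlip : LipschitzWith L ψ) {p : ℝ} (hp : 1 ≤ p) :
    ‖fderiv ℝ (fun x => ψ x • f x) x‖ₑ ^ p ≤
      ((2 ^ (p - 1) * (1 + L) ^ p : ℝ≥0) : ℝ≥0∞) * (‖fderiv ℝ f x‖ₑ ^ p + ‖f x‖ₑ ^ p) := by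
  have hp0 : 0 ≤ p := by linarith
  have hle : ‖fderiv ℝ (fun x => ψ x • f x) x‖₊ ≤
      (1 + L) * (‖fderiv ℝ f x‖₊ + ‖f x‖₊) := by
    rw [fderiv_fun_smul hψ hf]
    calc ‖ψ x • fderiv ℝ f x + (fderiv ℝ ψ x).smulRight (f x)‖₊
        ≤ ‖ψ x‖₊ * ‖fderiv ℝ f x‖₊ + ‖fderiv ℝ ψ x‖₊ * ‖f x‖₊ := by
          grw [nnnorm_add_le, nnnorm_smul, ContinuousLinearMap.nnnorm_smulRight_apply]
      _ ≤ 1 * ‖fderiv ℝ f x‖₊ + L * ‖f x‖₊ := by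
          gcongr
          · exact hψ_le
          · exact norm_fderiv_le_of_lipschitz ℝ hlip
      _ ≤ (1 + L) * ‖fderiv ℝ f x‖₊ + (1 + L) * ‖f x‖₊ := by
          gcongr
          · exact le_self_add
          · exact le_add_self
      _ = (1 + L) * (‖fderiv ℝ f x‖₊ + ‖f x‖₊) := by ring
  simp only [enorm_eq_nnnorm, ← ENNReal.coe_rpow_of_nonneg _ hp0]
  norm_cast
  calc ‖fderiv ℝ (fun x => ψ x • f x) x‖₊ ^ p
      ≤ ((1 + L) * (‖fderiv ℝ f x‖₊ + ‖f x‖₊)) ^ p := by gcongr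
    _ = (1 + L) ^ p * (‖fderiv ℝ f x‖₊ + ‖f x‖₊) ^ p := NNReal.mul_rpow
    _ ≤ (1 + L) ^ p * (2 ^ (p - 1) * (‖fderiv ℝ f x‖₊ ^ p + ‖f x‖₊ ^ p)) := by
        gcongr
        exact NNReal.rpow_add_le_mul_rpow_add_rpow _ _ hp
    _ = _ := by ring

variable [FiniteDimensional ℝ E]

variable (E) in
lemma exists_lipschitzWith_cutoff {r R : ℝ} (hr : 0 < r) (hrR : r < R) :
    ∃ L : ℝ≥0, ∀ c : E, ∃ ψ : E → ℝ, ContDiff ℝ 1 ψ ∧ LipschitzWith L ψ ∧ (∀ x, ‖ψ x‖ ≤ 1) ∧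
      EqOn ψ 1 (closedBall c r) ∧ tsupport ψ ⊆ closedBall c R := by
  let φ : ContDiffBump (0 : E) := ⟨r, R, hr, hrR⟩
  have hφ : ContDiff ℝ 1 φ := φ.contDiff
  obtain ⟨L, hL⟩ := hφ.lipschitzWith_of_hasCompactSupport φ.hasCompactSupport one_ne_zero
  refine ⟨L, fun c => ⟨fun x => φ (x - c), hφ.comp (contDiff_id.sub contDiff_const),
    LipschitzWith.of_dist_le_mul fun x y => by simpa using hL.dist_le_mul (x - c) (y - c),
    fun x => by simpa [abs_of_nonneg φ.nonneg] using φ.le_one, fun x hx => ?_,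
    closure_minimal (fun x hx => ?_) isClosed_closedBall⟩⟩
  · exact φ.one_of_mem_closedBall (by simpa [dist_eq_norm] using hx)
  · by_contra hxR
    refine hx (φ.zero_of_le_dist ?_)
    simpa [φ, dist_eq_norm] using (not_le.1 (mt mem_closedBall.2 hxR)).le

variable [Nontrivial E] [MeasurableSpace E] [BorelSpace E] [NormedAddCommGroup F]
  [InnerProductSpace ℝ F] {p q : ℝ}

variable (F) in
lemma exists_lintegral_rpow_le_lintegral_fderiv (μ : Measure E) [μ.IsAddHaarMeasure] (hp : 1 ≤ p)
    (hq : 0 < q) (hpq : q⁻¹ = p⁻¹ - (finrank ℝ E : ℝ)⁻¹) :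
    ∃ C : ℝ≥0, ∀ f : E → F, ContDiff ℝ 1 f → HasCompactSupport f →
      (∫⁻ x, ‖f x‖ₑ ^ q ∂μ) ^ (p / q) ≤ C * ∫⁻ x, ‖fderiv ℝ f x‖ₑ ^ p ∂μ := by
  have hp0 : 0 < p := by linarith
  lift p to ℝ≥0 using hp0.le
  lift q to ℝ≥0 using hq.le
  refine ⟨eLpNormLESNormFDerivOfEqInnerConst μ p ^ (p : ℝ), fun f hf hcf => ?_⟩
  have hgns := eLpNorm_le_eLpNorm_fderiv_of_eq_inner μ hf hcf (p := p) (p' := q)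
    (mod_cast hp) finrank_pos hpq
  rw [← eLpNorm_nnreal_pow_eq_lintegral (mod_cast hq.ne'),
    ← eLpNorm_nnreal_pow_eq_lintegral (mod_cast hp0.ne'), ← ENNReal.rpow_mul,
    mul_div_cancel₀ _ hq.ne', ENNReal.coe_rpow_of_nonneg _ hp0.le,
    ← ENNReal.mul_rpow_of_nonneg _ _ hp0.le]
  exact ENNReal.rpow_le_rpow hgns hp0.le

variable (F) in
lemma exists_setLIntegral_closedBall_rpow_le (μ : Measure E) [μ.IsAddHaarMeasure] (hp : 1 ≤ p)
    (hq : 0 < q) (hpq : q⁻¹ = p⁻¹ - (finrank ℝ E : ℝ)⁻¹) {r R : ℝ} (hr : 0 < r) (hrR : r < R) :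
    ∃ C : ℝ≥0, ∀ f : E → F, ContDiff ℝ 1 f → ∀ c : E,
      (∫⁻ x in closedBall c r, ‖f x‖ₑ ^ q ∂μ) ^ (p / q) ≤
        C * ∫⁻ x in closedBall c R, (‖fderiv ℝ f x‖ₑ ^ p + ‖f x‖ₑ ^ p) ∂μ := by
  have hp0 : 0 < p := by linarith
  obtain ⟨C, hC⟩ := exists_lintegral_rpow_le_lintegral_fderiv F μ hp hq hpq
  obtain ⟨L, hL⟩ := exists_lipschitzWith_cutoff E hr hrR
  set A : ℝ≥0 := 2 ^ (p - 1) * (1 + L) ^ p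
  refine ⟨C * A, fun f hf c => ?_⟩
  obtain ⟨ψ, hψ, hlip, hψ_le, hψ_one, hψ_supp⟩ := hL c
  set g : E → F := fun x => ψ x • f x
  have hψ_cs : HasCompactSupport ψ :=
    (isCompact_closedBall c R).of_isClosed_subset (isClosed_tsupport ψ) hψ_supp
  have hg_supp : tsupport g ⊆ closedBall c R :=
    (tsupport_smul_subset_left ψ f).trans hψ_supp
  have hfderiv (x) : ‖fderiv ℝ g x‖ₑ ^ p ≤
      (closedBall c R).indicator (fun x => A * (‖fderiv ℝ f x‖ₑ ^ p + ‖f x‖ₑ ^ p)) x := by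
    by_cases hx : x ∈ closedBall c R
    · rw [indicator_of_mem hx]
      exact enorm_fderiv_smul_rpow_le (hψ.differentiable one_ne_zero x)
        (hf.differentiable one_ne_zero x) (hψ_le x) hlip hp
    · rw [fderiv_of_notMem_tsupport ℝ (mt (@hg_supp x) hx), ← ofReal_norm, norm_zero,
        ENNReal.ofReal_zero, ENNReal.zero_rpow_of_pos hp0]
      exact zero_le
  calc (∫⁻ x in closedBall c r, ‖f x‖ₑ ^ q ∂μ) ^ (p / q)
      = (∫⁻ x in closedBall c r, ‖g x‖ₑ ^ q ∂μ) ^ (p / q) := by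
        congr 1
        exact setLIntegral_congr_fun measurableSet_closedBall fun x hx => by simp [g, hψ_one hx]
    _ ≤ (∫⁻ x, ‖g x‖ₑ ^ q ∂μ) ^ (p / q) := by
        gcongr
        exact Measure.restrict_le_self
    _ ≤ C * ∫⁻ x, ‖fderiv ℝ g x‖ₑ ^ p ∂μ := hC g (hψ.smul hf) hψ_cs.smul_right
    _ ≤ C * ∫⁻ x in closedBall c R, A * (‖fderiv ℝ f x‖ₑ ^ p + ‖f x‖ₑ ^ p) ∂μ := by
        rw [← lintegral_indicator measurableSet_closedBall]
        gcongr with x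
        exact hfderiv x
    _ = _ := by rw [lintegral_const_mul' _ _ ENNReal.coe_ne_top, ENNReal.coe_mul C A, mul_assoc]

end LocalSobolev

section UnitCubes

variable {ι : Type*}

/-- The open unit cube `(0,1)^ι + y`. -/
def unitCube (y : ι → ℤ) : Set (EuclideanSpace ℝ ι) :=
  {x | ∀ i, (y i : ℝ) < x i ∧ x i < (y i : ℝ) + 1}

/-- The integer vector `y` as a point of Euclidean space: the corner of `unitCube y` and the centre
of the balls that replace it in the local Sobolev inequality. -/
def latticePoint (y : ι → ℤ) : EuclideanSpace ℝ ι :=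
  WithLp.toLp 2 fun i => (y i : ℝ)

variable [Fintype ι]

lemma ae_mem_iUnion_unitCube : ∀ᵐ x : EuclideanSpace ℝ ι, x ∈ ⋃ y, unitCube y := by
  have hcoord (i : ι) : ∀ᵐ x : EuclideanSpace ℝ ι, x i ∉ range ((↑) : ℤ → ℝ) :=
    ((Measure.quasiMeasurePreserving_eval (fun _ : ι => (volume : Measure ℝ)) i).comp
      (PiLp.volume_preserving_ofLp ι).quasiMeasurePreserving).ae
        ((countable_range _).ae_notMem volume)
  filter_upwards [ae_all_iff.2 hcoord] with x hx
  refine mem_iUnion.2 ⟨fun i => ⌊x i⌋, fun i => ⟨?_, Int.lt_floor_add_one _⟩⟩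
  exact (Int.floor_le _).lt_of_ne fun h => hx i ⟨_, h⟩

lemma lintegral_le_tsum_unitCube (f : EuclideanSpace ℝ ι → ℝ≥0∞) :
    ∫⁻ x, f x ≤ ∑' y, ∫⁻ x in unitCube y, f x := by
  calc ∫⁻ x, f x = ∫⁻ x in ⋃ y, unitCube y, f x := by
        rw [Measure.restrict_eq_self_of_ae_mem ae_mem_iUnion_unitCube]
    _ ≤ ∑' y, ∫⁻ x in unitCube y, f x := lintegral_iUnion_le _ _

lemma unitCube_subset_closedBall (y : ι → ℤ) :
    unitCube y ⊆ closedBall (latticePoint y) √(Fintype.card ι) := by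
  intro x hx
  have hcoord (i : ι) : dist (x i) (latticePoint y i) ^ 2 ≤ 1 := by
    have hxi : (y i : ℝ) < x i ∧ x i < y i + 1 := hx i
    rw [Real.dist_eq, sq_abs]
    change (x i - y i) ^ 2 ≤ 1
    nlinarith
  rw [mem_closedBall, EuclideanSpace.dist_eq]
  gcongr
  calc ∑ i, dist (x i) (latticePoint y i) ^ 2 ≤ ∑ _i : ι, (1 : ℝ) := by
        gcongr with i
        exact hcoord i
    _ = Fintype.card ι := by simp

lemma encard_latticePoint_closedBall_le (x : EuclideanSpace ℝ ι) (R : ℝ) :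
    {y : ι → ℤ | x ∈ closedBall (latticePoint y) R}.encard ≤
      ((⌊2 * R + 1⌋₊ ^ Fintype.card ι : ℕ) : ℕ∞) := by
  classical
  set s : Finset (ι → ℤ) := Fintype.piFinset fun i => Finset.Icc ⌈x i - R⌉ ⌊x i + R⌋
  have hsub : {y : ι → ℤ | x ∈ closedBall (latticePoint y) R} ⊆ s := by
    intro y hy
    refine Finset.mem_coe.2 (Fintype.mem_piFinset.2 fun i => ?_)
    have hi : |x i - y i| ≤ R :=
      (PiLp.norm_apply_le (x - latticePoint y) i).trans (mem_closedBall_iff_norm.1 hy)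
    rw [abs_le] at hi
    rw [Finset.mem_Icc, Int.ceil_le, Int.le_floor]
    constructor <;> linarith
  have hside (i : ι) : (Finset.Icc ⌈x i - R⌉ ⌊x i + R⌋).card ≤ ⌊2 * R + 1⌋₊ := by
    rw [Int.card_Icc, ← Int.floor_toNat]
    refine Int.toNat_le_toNat (Int.le_floor.2 ?_)
    push_cast
    linarith [Int.floor_le (x i + R), Int.le_ceil (x i - R)]
  calc {y : ι → ℤ | x ∈ closedBall (latticePoint y) R}.encard ≤ (s : Set (ι → ℤ)).encard :=
        encard_le_encard hsub
    _ = s.card := encard_coe_eq_coe_finsetCard s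
    _ ≤ _ := by
        rw [Fintype.card_piFinset]
        exact_mod_cast Finset.prod_le_pow_card _ _ _ fun i _ => hside i

lemma tsum_setLIntegral_closedBall_le (R : ℝ) (f : EuclideanSpace ℝ ι → ℝ≥0∞) :
    ∑' y, ∫⁻ x in closedBall (latticePoint y) R, f x ≤
      (⌊2 * R + 1⌋₊ ^ Fintype.card ι : ℕ) * ∫⁻ x, f x := by
  rw [← lintegral_sum_measure, ← nsmul_eq_mul, ← lintegral_smul_measure]
  refine lintegral_mono' ((Measure.sum_restrict_le (fun _ => measurableSet_closedBall)
    fun x => encard_latticePoint_closedBall_le x R).trans ?_) le_rfl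
  gcongr
  exact Measure.restrict_le_self

lemma setLIntegral_unitCube_le_ofReal_iSup {F : Type*} [NormedAddCommGroup F]
    {u : EuclideanSpace ℝ ι → F} (hu : Continuous u) (hcu : HasCompactSupport u) {p : ℝ}
    (hp : 0 < p) (y : ι → ℤ) :
    ∫⁻ x in unitCube y, ‖u x‖ₑ ^ p ≤
      ENNReal.ofReal (⨆ z : ι → ℤ, ∫ x in unitCube z, ‖u x‖ ^ p) := by
  have hbdd : BddAbove (range fun z : ι → ℤ => ∫ x in unitCube z, ‖u x‖ ^ p) := by
    refine ⟨∫ x, ‖u x‖ ^ p, ?_⟩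
    rintro _ ⟨z, rfl⟩
    exact setIntegral_le_integral (integrable_norm_rpow_of_hasCompactSupport hu hcu hp)
      (ae_of_all _ fun x => by positivity)
  rw [lintegral_enorm_rpow_eq_ofReal hu hcu hp]
  exact ENNReal.ofReal_le_ofReal (le_ciSup hbdd y)

variable (ι) in
lemma exists_setLIntegral_unitCube_rpow_le [Nonempty ι] (G : Type*) [NormedAddCommGroup G]
    [InnerProductSpace ℝ G] {p q : ℝ} (hp : 1 ≤ p) (hq : 0 < q)
    (hpq : q⁻¹ = p⁻¹ - (Fintype.card ι : ℝ)⁻¹) :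
    ∃ C : ℝ≥0, ∀ f : EuclideanSpace ℝ ι → G, ContDiff ℝ 1 f → ∀ y,
      (∫⁻ x in unitCube y, ‖f x‖ₑ ^ q) ^ (p / q) ≤
        C * ∫⁻ x in closedBall (latticePoint y) (√(Fintype.card ι) + 1),
          (‖fderiv ℝ f x‖ₑ ^ p + ‖f x‖ₑ ^ p) := by
  have hr : 0 < √(Fintype.card ι : ℝ) := Real.sqrt_pos.2 (mod_cast Fintype.card_pos)
  obtain ⟨C, hC⟩ := exists_setLIntegral_closedBall_rpow_le G
    (volume : Measure (EuclideanSpace ℝ ι)) hp hq (by simpa using hpq) hr (lt_add_one _)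
  refine ⟨C, fun f hf y => le_trans ?_ (hC f hf (latticePoint y))⟩
  gcongr
  exact unitCube_subset_closedBall y

variable (ι) in
lemma exists_lintegral_rpow_le_of_unitCube_le [Nonempty ι] (G : Type*) [NormedAddCommGroup G]
    [InnerProductSpace ℝ G] {p q : ℝ} (hp : 1 ≤ p) (hq : 0 < q)
    (hpq : q⁻¹ = p⁻¹ - (Fintype.card ι : ℝ)⁻¹) :
    ∃ C : ℝ≥0, ∀ f : EuclideanSpace ℝ ι → G, ContDiff ℝ 1 f → ∀ a : ℝ≥0∞,
      (∀ y, ∫⁻ x in unitCube y, ‖f x‖ₑ ^ q ≤ a) →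
      ∫⁻ x, ‖f x‖ₑ ^ q ≤ C * a ^ (1 - p / q) * ∫⁻ x, (‖fderiv ℝ f x‖ₑ ^ p + ‖f x‖ₑ ^ p) := by
  have hcard : (0 : ℝ) < Fintype.card ι := mod_cast Fintype.card_pos
  have hθ : 0 ≤ 1 - p / q :=
    sub_nonneg.2 ((div_le_one hq).2 (lt_of_inv_eq_inv_sub_inv hq hcard hpq).le)
  obtain ⟨C, hC⟩ := exists_setLIntegral_unitCube_rpow_le ι G hp hq hpq
  set R : ℝ := √(Fintype.card ι) + 1
  set K : ℕ := ⌊2 * R + 1⌋₊ ^ Fintype.card ι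
  refine ⟨C * K, fun f hf a ha => ?_⟩
  set e : EuclideanSpace ℝ ι → ℝ≥0∞ := fun x => ‖fderiv ℝ f x‖ₑ ^ p + ‖f x‖ₑ ^ p
  have hcube (y : ι → ℤ) : ∫⁻ x in unitCube y, ‖f x‖ₑ ^ q ≤
      a ^ (1 - p / q) * (C * ∫⁻ x in closedBall (latticePoint y) R, e x) := by
    set m : ℝ≥0∞ := ∫⁻ x in unitCube y, ‖f x‖ₑ ^ q
    calc m = m ^ (1 - p / q) * m ^ (p / q) := by
          rw [← ENNReal.rpow_add_of_nonneg _ _ hθ (by positivity), sub_add_cancel,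
            ENNReal.rpow_one]
      _ ≤ _ := by
          gcongr
          · exact ha y
          · exact hC f hf y
  calc ∫⁻ x, ‖f x‖ₑ ^ q ≤ ∑' y, ∫⁻ x in unitCube y, ‖f x‖ₑ ^ q :=
        lintegral_le_tsum_unitCube _
    _ ≤ ∑' y : ι → ℤ, a ^ (1 - p / q) *
          (C * ∫⁻ x in closedBall (latticePoint y) R, e x) := by
        gcongr with y
        exact hcube y
    _ = a ^ (1 - p / q) * (C * ∑' y : ι → ℤ, ∫⁻ x in closedBall (latticePoint y) R, e x) := by
        rw [ENNReal.tsum_mul_left, ENNReal.tsum_mul_left]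
    _ ≤ a ^ (1 - p / q) * (C * (K * ∫⁻ x, e x)) := by
        gcongr
        exact tsum_setLIntegral_closedBall_le _ _
    _ = _ := by
        push_cast
        ring

end UnitCubes

section Truncation

lemma exists_enorm_rpow_le_mul_enorm_rpow {F G : Type*} [SeminormedAddCommGroup F]
    [SeminormedAddCommGroup G] {χ : F → G} (hχ0 : χ =ᶠ[𝓝 0] 0) {B : ℝ} (hB : ∀ z, ‖χ z‖ ≤ B)
    {r s : ℝ} (hr : 0 < r) (hs : 0 ≤ s) : ∃ C : ℝ≥0, ∀ z, ‖χ z‖ₑ ^ r ≤ C * ‖z‖ₑ ^ s := by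
  obtain ⟨δ, hδ, hχδ⟩ := Metric.eventually_nhds_iff_ball.1 hχ0
  lift B to ℝ≥0 using (norm_nonneg _).trans (hB 0)
  lift δ to ℝ≥0 using hδ.le
  refine ⟨B ^ r / δ ^ s, fun z => ?_⟩
  simp only [enorm_eq_nnnorm, ← ENNReal.coe_rpow_of_nonneg _ hr.le,
    ← ENNReal.coe_rpow_of_nonneg _ hs]
  norm_cast
  by_cases hz : z ∈ ball 0 (δ : ℝ)
  · simp [hχδ z hz, hr.ne']
  · have hδz : δ ≤ ‖z‖₊ := by simpa [← NNReal.coe_le_coe] using hz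
    calc ‖χ z‖₊ ^ r ≤ B ^ r := by
          gcongr
          exact hB z
      _ = B ^ r / δ ^ s * δ ^ s := by
          rw [div_mul_cancel₀ _ (NNReal.rpow_pos (mod_cast hδ)).ne']
      _ ≤ B ^ r / δ ^ s * ‖z‖₊ ^ s := by gcongr

lemma enorm_fderiv_comp_le {E F G : Type*} [NormedAddCommGroup E] [NormedSpace ℝ E]
    [NormedAddCommGroup F] [NormedSpace ℝ F] [NormedAddCommGroup G] [NormedSpace ℝ G]
    {χ : F → G} {u : E → F} {x : E} {L : ℝ≥0} (hχ : DifferentiableAt ℝ χ (u x))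
    (hu : DifferentiableAt ℝ u x) (hlip : LipschitzWith L χ) :
    ‖fderiv ℝ (fun x => χ (u x)) x‖ₑ ≤ L * ‖fderiv ℝ u x‖ₑ := by
  rw [fderiv_fun_comp x hχ hu]
  simp only [enorm_eq_nnnorm]
  norm_cast
  grw [ContinuousLinearMap.opNNNorm_comp_le]
  gcongr
  exact norm_fderiv_le_of_lipschitz ℝ hlip

lemma contDiff_comp_norm {F G : Type*} [NormedAddCommGroup F] [InnerProductSpace ℝ F]
    [NormedAddCommGroup G] [NormedSpace ℝ G] {χ : ℝ → G} {n : WithTop ℕ∞} (hχ : ContDiff ℝ n χ)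
    (hχ0 : χ =ᶠ[𝓝 0] 0) : ContDiff ℝ n fun z : F => χ ‖z‖ := by
  refine contDiff_iff_contDiffAt.2 fun z => ?_
  obtain rfl | hz := eq_or_ne z 0
  · have hzero : (fun z : F => χ ‖z‖) =ᶠ[𝓝 0] fun _ => 0 :=
      (tendsto_norm_zero (E := F)).eventually hχ0
    exact contDiffAt_const.congr_of_eventuallyEq hzero
  · exact hχ.contDiffAt.comp z (contDiffAt_norm ℝ hz)

variable {F G : Type*} [NormedAddCommGroup F] [InnerProductSpace ℝ F] [NormedAddCommGroup G]
  {χ : F → G} {p q B : ℝ} {L : ℝ≥0}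

lemma exists_lintegral_fderiv_comp_rpow_add_rpow_le [NormedSpace ℝ G] {E : Type*}
    [NormedAddCommGroup E] [NormedSpace ℝ E] [FiniteDimensional ℝ E] [Nontrivial E]
    [MeasurableSpace E] [BorelSpace E] (μ : Measure E) [μ.IsAddHaarMeasure] (hp : 1 ≤ p)
    (hq : 0 < q) (hpq : q⁻¹ = p⁻¹ - (finrank ℝ E : ℝ)⁻¹) (hχ : Differentiable ℝ χ)
    (hlip : LipschitzWith L χ) (hχ0 : χ =ᶠ[𝓝 0] 0) (hB : ∀ z, ‖χ z‖ ≤ B) :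
    ∃ C : ℝ≥0, ∀ u : E → F, ContDiff ℝ 1 u → HasCompactSupport u →
      ∫⁻ x, (‖fderiv ℝ (fun x => χ (u x)) x‖ₑ ^ p + ‖χ (u x)‖ₑ ^ p) ∂μ ≤
        C * (∫⁻ x, ‖fderiv ℝ u x‖ₑ ^ p ∂μ + (∫⁻ x, ‖fderiv ℝ u x‖ₑ ^ p ∂μ) ^ (q / p)) := by
  have hp0 : 0 < p := by linarith
  obtain ⟨A, hA⟩ := exists_enorm_rpow_le_mul_enorm_rpow hχ0 hB hp0 hq.le
  obtain ⟨D, hD⟩ := exists_lintegral_rpow_le_lintegral_fderiv F μ hp hq hpq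
  refine ⟨L ^ p + A * D ^ (q / p), fun u hu hcu => ?_⟩
  set I : ℝ≥0∞ := ∫⁻ x, ‖fderiv ℝ u x‖ₑ ^ p ∂μ
  have hsob : ∫⁻ x, ‖u x‖ₑ ^ q ∂μ ≤ (D * I) ^ (q / p) := by
    rw [← inv_div p q, ENNReal.le_rpow_inv_iff (by positivity)]
    exact hD u hu hcu
  have hgrad (x) : ‖fderiv ℝ (fun x => χ (u x)) x‖ₑ ^ p ≤
      ((L ^ p : ℝ≥0) : ℝ≥0∞) * ‖fderiv ℝ u x‖ₑ ^ p := by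
    rw [ENNReal.coe_rpow_of_nonneg _ hp0.le, ← ENNReal.mul_rpow_of_nonneg _ _ hp0.le]
    gcongr
    exact enorm_fderiv_comp_le (hχ _) (hu.differentiable one_ne_zero x) hlip
  have := hu.continuous_fderiv one_ne_zero
  calc ∫⁻ x, (‖fderiv ℝ (fun x => χ (u x)) x‖ₑ ^ p + ‖χ (u x)‖ₑ ^ p) ∂μ
      ≤ ∫⁻ x, (((L ^ p : ℝ≥0) : ℝ≥0∞) * ‖fderiv ℝ u x‖ₑ ^ p + A * ‖u x‖ₑ ^ q) ∂μ := by
        gcongr with x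
        · exact hgrad x
        · exact hA (u x)
    _ = ((L ^ p : ℝ≥0) : ℝ≥0∞) * I + A * ∫⁻ x, ‖u x‖ₑ ^ q ∂μ := by
        rw [lintegral_add_left (by fun_prop), lintegral_const_mul' _ _ ENNReal.coe_ne_top,
          lintegral_const_mul' _ _ ENNReal.coe_ne_top]
    _ ≤ ((L ^ p : ℝ≥0) : ℝ≥0∞) * I + A * (D * I) ^ (q / p) := by gcongr
    _ = ((L ^ p : ℝ≥0) : ℝ≥0∞) * I + ((A * D ^ (q / p) : ℝ≥0) : ℝ≥0∞) * I ^ (q / p) := by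
        have hqp : 0 ≤ q / p := by positivity
        rw [ENNReal.mul_rpow_of_nonneg _ _ hqp, ENNReal.coe_mul,
          ENNReal.coe_rpow_of_nonneg _ hqp, mul_assoc]
    _ ≤ _ := by
        rw [mul_add]
        gcongr
        · exact le_self_add
        · exact le_add_self

variable [InnerProductSpace ℝ G] {ι : Type*} [Fintype ι]

variable (ι) in
lemma exists_lintegral_comp_rpow_le_of_unitCube_le [Nonempty ι] (hp : 1 ≤ p) (hq : 0 < q)
    (hpq : q⁻¹ = p⁻¹ - (Fintype.card ι : ℝ)⁻¹) (hχ : ContDiff ℝ 1 χ) (hlip : LipschitzWith L χ)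
    (hχ0 : χ =ᶠ[𝓝 0] 0) (hB : ∀ z, ‖χ z‖ ≤ B) :
    ∃ C : ℝ≥0, ∀ u : EuclideanSpace ℝ ι → F, ContDiff ℝ 1 u → HasCompactSupport u →
      ∀ a : ℝ≥0∞, (∀ y, ∫⁻ x in unitCube y, ‖u x‖ₑ ^ p ≤ a) →
      ∫⁻ x, ‖χ (u x)‖ₑ ^ q ≤ C * a ^ (1 - p / q) *
        ((∫⁻ x, ‖fderiv ℝ u x‖ₑ ^ p) + (∫⁻ x, ‖fderiv ℝ u x‖ₑ ^ p) ^ (q / p)) := by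
  have hcard : (0 : ℝ) < Fintype.card ι := mod_cast Fintype.card_pos
  have hθ : 0 ≤ 1 - p / q :=
    sub_nonneg.2 ((div_le_one hq).2 (lt_of_inv_eq_inv_sub_inv hq hcard hpq).le)
  obtain ⟨A, hA⟩ := exists_enorm_rpow_le_mul_enorm_rpow hχ0 hB hq (by linarith : 0 ≤ p)
  obtain ⟨C, hC⟩ := exists_lintegral_rpow_le_of_unitCube_le ι G hp hq hpq
  obtain ⟨D, hD⟩ := exists_lintegral_fderiv_comp_rpow_add_rpow_le
    (volume : Measure (EuclideanSpace ℝ ι)) hp hq (by simpa using hpq)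
    (hχ.differentiable one_ne_zero) hlip hχ0 hB
  refine ⟨C * A ^ (1 - p / q) * D, fun u hu hcu a ha => ?_⟩
  set I : ℝ≥0∞ := ∫⁻ x, ‖fderiv ℝ u x‖ₑ ^ p
  have hcube (y : ι → ℤ) : ∫⁻ x in unitCube y, ‖χ (u x)‖ₑ ^ q ≤ A * a := by
    calc ∫⁻ x in unitCube y, ‖χ (u x)‖ₑ ^ q ≤ ∫⁻ x in unitCube y, A * ‖u x‖ₑ ^ p := by
          gcongr with x
          exact hA (u x)
      _ = A * ∫⁻ x in unitCube y, ‖u x‖ₑ ^ p := lintegral_const_mul' _ _ ENNReal.coe_ne_top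
      _ ≤ A * a := by grw [ha y]
  calc ∫⁻ x, ‖χ (u x)‖ₑ ^ q
      ≤ C * (A * a) ^ (1 - p / q) *
          ∫⁻ x, (‖fderiv ℝ (fun x => χ (u x)) x‖ₑ ^ p + ‖χ (u x)‖ₑ ^ p) :=
        hC _ (hχ.comp hu) _ hcube
    _ ≤ C * (A * a) ^ (1 - p / q) * (D * (I + I ^ (q / p))) := by grw [hD u hu hcu]
    _ = _ := by
        rw [ENNReal.mul_rpow_of_nonneg _ _ hθ, ENNReal.coe_mul, ENNReal.coe_mul,
          ENNReal.coe_rpow_of_nonneg _ hθ]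
        ring

lemma tendsto_lintegral_comp_rpow_of_unitCube_le [Nonempty ι] (hp : 1 ≤ p) (hq : 0 < q)
    (hpq : q⁻¹ = p⁻¹ - (Fintype.card ι : ℝ)⁻¹) (hχ : ContDiff ℝ 1 χ) (hlip : LipschitzWith L χ)
    (hχ0 : χ =ᶠ[𝓝 0] 0) (hB : ∀ z, ‖χ z‖ ≤ B) {κ : Type*} {l : Filter κ}
    {u : κ → EuclideanSpace ℝ ι → F} (hu : ∀ k, ContDiff ℝ 1 (u k))
    (hcu : ∀ k, HasCompactSupport (u k)) {m : ℝ≥0∞} (hm : m ≠ ∞)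
    (hgrad : ∀ k, ∫⁻ x, ‖fderiv ℝ (u k) x‖ₑ ^ p ≤ m) {a : κ → ℝ≥0∞}
    (ha : ∀ k y, ∫⁻ x in unitCube y, ‖u k x‖ₑ ^ p ≤ a k) (ha0 : Tendsto a l (𝓝 0)) :
    Tendsto (fun k => ∫⁻ x, ‖χ (u k x)‖ₑ ^ q) l (𝓝 0) := by
  have hcard : (0 : ℝ) < Fintype.card ι := mod_cast Fintype.card_pos
  have hqp : 0 ≤ q / p := by positivity
  have hθ : 0 < 1 - p / q := sub_pos.2 ((div_lt_one hq).2 (lt_of_inv_eq_inv_sub_inv hq hcard hpq))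
  obtain ⟨C, hC⟩ := exists_lintegral_comp_rpow_le_of_unitCube_le ι hp hq hpq hχ hlip hχ0 hB
  have hbound (k) : ∫⁻ x, ‖χ (u k x)‖ₑ ^ q ≤ C * a k ^ (1 - p / q) * (m + m ^ (q / p)) := by
    refine (hC (u k) (hu k) (hcu k) _ (ha k)).trans ?_
    gcongr <;> exact hgrad k
  have hm' : m + m ^ (q / p) ≠ ∞ := by finiteness
  have hlim : Tendsto (fun k => C * a k ^ (1 - p / q) * (m + m ^ (q / p))) l (𝓝 0) := by
    simpa [hθ] using ENNReal.Tendsto.mul_const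
      (ENNReal.Tendsto.const_mul (ha0.ennrpow_const (1 - p / q)) (.inr ENNReal.coe_ne_top))
      (.inr hm')
  exact tendsto_of_tendsto_of_tendsto_of_le_of_le tendsto_const_nhds hlim (fun _ => zero_le) hbound

theorem chi_truncation_vanishes_general {κ : Type*} {l : Filter κ} (hp : 1 ≤ p)
    (hpι : p < Fintype.card ι) (hχ : ContDiff ℝ 1 χ) (hlip : LipschitzWith L χ)
    (hχ0 : χ =ᶠ[𝓝 0] 0) (hB : ∀ z, ‖χ z‖ ≤ B) {u : κ → EuclideanSpace ℝ ι → F}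
    (hu : ∀ k, ContDiff ℝ 1 (u k)) (hcu : ∀ k, HasCompactSupport (u k)) {M : ℝ}
    (hM : ∀ k, ∫ x, ‖fderiv ℝ (u k) x‖ ^ p ≤ M)
    (hcubes : Tendsto (fun k => ⨆ y : ι → ℤ, ∫ x in unitCube y, ‖u k x‖ ^ p) l (𝓝 0)) :
    Tendsto (fun k => ∫ x, ‖χ (u k x)‖ ^ (Fintype.card ι * p / (Fintype.card ι - p))) l (𝓝 0) := by
  have hp0 : 0 < p := by linarith
  have hn : (0 : ℝ) < Fintype.card ι := by linarith
  have : Nonempty ι := Fintype.card_pos_iff.1 (mod_cast hn)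
  have hnp : 0 < Fintype.card ι - p := by linarith
  set q : ℝ := Fintype.card ι * p / (Fintype.card ι - p) with hq_def
  have hq : 0 < q := by positivity
  have hpq : q⁻¹ = p⁻¹ - (Fintype.card ι : ℝ)⁻¹ := by
    rw [hq_def]
    field_simp
  have hgrad (k) : ∫⁻ x, ‖fderiv ℝ (u k) x‖ₑ ^ p ≤ ENNReal.ofReal M := by
    rw [lintegral_enorm_rpow_eq_ofReal ((hu k).continuous_fderiv one_ne_zero)
      ((hcu k).fderiv ℝ) hp0]
    exact ENNReal.ofReal_le_ofReal (hM k)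
  have hlim := tendsto_lintegral_comp_rpow_of_unitCube_le hp hq hpq hχ hlip hχ0 hB hu hcu
    ENNReal.ofReal_ne_top hgrad
    (fun k => setLIntegral_unitCube_le_ofReal_iSup (hu k).continuous (hcu k) hp0)
    (ENNReal.ofReal_zero ▸ ENNReal.tendsto_ofReal hcubes)
  refine ((ENNReal.tendsto_toReal ENNReal.zero_ne_top).comp hlim).congr fun k => ?_
  have hcont : Continuous fun x => χ (u k x) := (hχ.comp (hu k)).continuous
  have hcomp : HasCompactSupport fun x => χ (u k x) := (hcu k).comp_left hχ0.self_of_nhds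
  rw [Function.comp_apply, lintegral_enorm_rpow_eq_ofReal hcont hcomp hq,
    ENNReal.toReal_ofReal (integral_nonneg fun x => by positivity)]

end Truncation

/-- If `(u_k)` is bounded in `Ḣ^{1,p}(ℝ^N)` and the `L^p` masses on unit cubes go to zero
uniformly, then `∫ χ(|u_k|)^{p^*} → 0`. -/
theorem chi_truncation_vanishes (N : ℕ) (p : ℝ) (hp1 : 1 < p) (hpN : p < N)
    (χ : ℝ → ℝ) (hχ : ContDiff ℝ (⊤ : ℕ∞) χ)
    (hχsupp : ∀ t, χ t ≠ 0 → t ∈ Ioo (1/2 : ℝ) 4)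
    (hχbd : ∀ t, χ t ∈ Icc (0 : ℝ) 3)
    (hχ' : ∀ t, |deriv χ t| ≤ 2)
    (u : ℕ → EuclideanSpace ℝ (Fin N) → ℝ)
    (hsmooth : ∀ k, ContDiff ℝ (⊤ : ℕ∞) (u k)) (hcs : ∀ k, HasCompactSupport (u k))
    (M : ℝ) (hbdd : ∀ k, ∫ x, ‖fderiv ℝ (u k) x‖ ^ p ≤ M)
    (hcubes : Tendsto (fun k => ⨆ y : Fin N → ℤ,
        ∫ x in {x : EuclideanSpace ℝ (Fin N) |
          ∀ i, (y i : ℝ) < x i ∧ x i < (y i : ℝ) + 1}, |u k x| ^ p)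
      atTop (𝓝 0)) :
    Tendsto (fun k => ∫ x, χ |u k x| ^ ((N : ℝ) * p / ((N : ℝ) - p))) atTop (𝓝 0) := by
  have hχ0 : χ =ᶠ[𝓝 0] 0 := by
    filter_upwards [gt_mem_nhds one_half_pos] with t ht
    exact by_contra fun h => ht.not_gt (hχsupp t h).1
  have hlip : LipschitzWith 2 χ :=
    lipschitzWith_of_nnnorm_deriv_le (hχ.differentiable (by simp)) hχ'
  have hnorm (t : ℝ) : ‖χ t‖ = χ t := abs_of_nonneg (hχbd t).1
  have hlim := chi_truncation_vanishes_general (ι := Fin N) (χ := fun t : ℝ => χ ‖t‖) (B := 3)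
    hp1.le (by simpa using hpN) (contDiff_comp_norm (hχ.of_le (by simp)) hχ0)
    (hlip.comp lipschitzWith_one_norm) (hχ0.comp_tendsto tendsto_norm_zero)
    (fun t => (hnorm _).trans_le (hχbd _).2) (fun k => (hsmooth k).of_le (by simp)) hcs hbdd hcubes
  simpa only [hnorm, Fintype.card_fin, Real.norm_eq_abs] using hlim
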